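/- Define g(x) = (1+x)log(1+x) - x·log x for x > 0. Fix 0 < τ < 1 and K ≥ 0, and set η(N) = τN + K, p(N) = sqrt((N + η + 1)² - 4τN(N+1)), ℓ(N) = (p - η + N - 1)/2. Then lim_{N→∞} [g(η(N)) - g(ℓ(N))] = log(τ/(1-τ)). -/

import Mathlib

open Filter Topology in
lemma g_aux (f : ℝ → ℝ) (c : ℝ) (hc : 0 < c)
    (hf : Tendsto (fun N : ℝ => f N / N) atTop (𝓝 c)) :
    Tendsto (fun N : ℝ => ((1 + f N) * Real.log (1 + f N) - f N * Real.log (f N)) - Real.log N)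
      atTop (𝓝 (Real.log c + 1)) := by
  have hftop : Tendsto f atTop atTop := by
    have h := hf.pos_mul_atTop hc tendsto_id
    refine h.congr' ?_
    filter_upwards [eventually_gt_atTop 0] with N hN
    simp only [id]
    field_simp
  have h1 : Tendsto (fun x : ℝ => x * Real.log (1 + 1 / x)) atTop (𝓝 1) :=
    Real.tendsto_mul_log_one_add_div_atTop 1
  have h2 : Tendsto (fun x : ℝ => Real.log (1 + 1 / x)) atTop (𝓝 0) := by
    have h := h1.mul tendsto_inv_atTop_zero
    rw [mul_zero] at h
    refine h.congr' ?_
    filter_upwards [eventually_gt_atTop 0] with N hN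
    field_simp
  have h3 := (hf.log hc.ne').add ((h1.add h2).comp hftop)
  rw [add_zero] at h3
  refine h3.congr' ?_
  filter_upwards [eventually_gt_atTop 0, hftop.eventually_gt_atTop 0] with N hN hfN
  simp only [Function.comp]
  have e : 1 + 1 / f N = (1 + f N) / f N := by field_simp; ring
  rw [e, Real.log_div hfN.ne' hN.ne', Real.log_div (by positivity) hfN.ne']
  ring


theorem limit_g_eta_minus_g_ell (τ K : ℝ) (hτ1 : 0 < τ) (hτ2 : τ < 1) (hK : 0 ≤ K) :
    Filter.Tendsto
      (fun N : ℝ =>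
        ((1 + (τ * N + K)) * Real.log (1 + (τ * N + K))
            - (τ * N + K) * Real.log (τ * N + K))
          - ((1 + ((Real.sqrt ((N + (τ * N + K) + 1)^2 - 4 * τ * N * (N + 1))
                - (τ * N + K) + N - 1) / 2))
              * Real.log (1 + ((Real.sqrt ((N + (τ * N + K) + 1)^2
                  - 4 * τ * N * (N + 1)) - (τ * N + K) + N - 1) / 2))
            - ((Real.sqrt ((N + (τ * N + K) + 1)^2 - 4 * τ * N * (N + 1))
                - (τ * N + K) + N - 1) / 2)
              * Real.log ((Real.sqrt ((N + (τ * N + K) + 1)^2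
                  - 4 * τ * N * (N + 1)) - (τ * N + K) + N - 1) / 2)))
      Filter.atTop (nhds (Real.log (τ / (1 - τ)))) := by
  have hinv : Filter.Tendsto (fun N : ℝ => N⁻¹) Filter.atTop (nhds 0) := tendsto_inv_atTop_zero
  have hη : Filter.Tendsto (fun N : ℝ => (τ * N + K) / N) Filter.atTop (nhds τ) := by
    have h := (hinv.const_mul K).const_add τ
    rw [mul_zero, add_zero] at h
    refine h.congr' ?_
    filter_upwards [Filter.eventually_gt_atTop 0] with N hN
    field_simp
  have hp : Filter.Tendsto (fun N : ℝ =>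
      Real.sqrt ((N + (τ * N + K) + 1)^2 - 4 * τ * N * (N + 1)) / N)
      Filter.atTop (nhds (1 - τ)) := by
    have hc : Continuous (fun x : ℝ =>
      Real.sqrt ((1 + τ + (K + 1) * x)^2 - 4 * τ * (1 + x))) := by fun_prop
    have h := (hc.tendsto 0).comp hinv
    have e : Real.sqrt ((1 + τ + (K + 1) * 0)^2 - 4 * τ * (1 + 0)) = 1 - τ := by
      rw [show (1 + τ + (K + 1) * 0)^2 - 4 * τ * (1 + 0) = (1 - τ)^2 by ring]
      exact Real.sqrt_sq (by linarith)
    rw [e] at h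
    refine h.congr' ?_
    filter_upwards [Filter.eventually_gt_atTop 0] with N hN
    simp only [Function.comp]
    rw [show (N + (τ * N + K) + 1)^2 - 4 * τ * N * (N + 1)
      = ((1 + τ + (K + 1) * N⁻¹)^2 - 4 * τ * (1 + N⁻¹)) * N^2 by field_simp; ring]
    rw [Real.sqrt_mul' _ (sq_nonneg N), Real.sqrt_sq hN.le]
    field_simp
  have hl : Filter.Tendsto (fun N : ℝ =>
      ((Real.sqrt ((N + (τ * N + K) + 1)^2 - 4 * τ * N * (N + 1))
                - (τ * N + K) + N - 1) / 2) / N)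
      Filter.atTop (nhds (1 - τ)) := by
    have h := (((hp.sub hη).add_const 1).sub hinv).div_const 2
    rw [show (1 - τ - τ + 1 - 0) / 2 = 1 - τ by ring] at h
    refine h.congr' ?_
    filter_upwards [Filter.eventually_gt_atTop 0] with N hN
    field_simp
  have h := (g_aux _ _ hτ1 hη).sub (g_aux _ _ (by linarith) hl)
  rw [Real.log_div hτ1.ne' (by linarith)]
  rw [show Real.log τ + 1 - (Real.log (1 - τ) + 1) = Real.log τ - Real.log (1 - τ) by ring] at h
  refine h.congr ?_
  intro N
  ring
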